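/- arXiv:0810.5152 — 2 statements merged into one kernel-verified Lean document; each statement's English description precedes it below -/
import Mathlib

section
/- Let S be a finite set equipped with a strict partial order ⊏. If every totally disordered subset of S (a subset whose elements are pairwise incomparable with respect to ⊏) has at most k elements, then S can be partitioned into at most k subsets each of which is linearly ordered by ⊏. Moreover, if l denotes the maximal cardinality of a totally disordered subset of S, then S can be partitioned into exactly l linearly ordered subsets. -/
/-!
Galvin's argument for Dilworth's theorem, by induction on `S`, for an arbitrary preorder. Remove a
maximal element `a` and cover the rest by as many chains as some antichain in it has elements, say
`n`. In each chain take a topmost element among those lying on an `n`-element antichain; these tops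
again form an antichain `B`. If `a` is above no element of `B`, then `B ∪ {a}` is an antichain and
`{a}` is one more chain. If `b ≤ a` for some `b ∈ B`, then `a` together with the part below `b` of
the chain of `b` is a chain whose removal destroys every `n`-element antichain, so the remainder
needs fewer than `n` chains.
-/

open Finset

section Relation

variable {α : Type*} {r : α → α → Prop} {S A : Finset α} {n : ℕ} {c : α → ℕ}

/-- `A` is an `n`-element antichain of `r` contained in `S`. -/
structure IsNAntichain (r : α → α → Prop) (S : Finset α) (n : ℕ) (A : Finset α) : Prop where
  subset : A ⊆ S
  isAntichain : IsAntichain r (A : Set α)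
  card_eq : #A = n

/-- A partition of `S` into `n` chains of `r`, some possibly empty, encoded by a colouring whose
colour classes are the chains; the values of `c` outside `S` are irrelevant. -/
structure IsChainColoring (r : α → α → Prop) (S : Finset α) (n : ℕ) (c : α → ℕ) : Prop where
  lt : ∀ x ∈ S, c x < n
  isChain : ∀ i, IsChain r {x | x ∈ S ∧ c x = i}

namespace IsNAntichain

theorem mono {T : Finset α} (hA : IsNAntichain r S n A) (hST : S ⊆ T) : IsNAntichain r T n A :=
  ⟨hA.subset.trans hST, hA.isAntichain, hA.card_eq⟩

theorem insert_of_erase [DecidableEq α] {a : α} (hA : IsNAntichain r (S.erase a) n A) (ha : a ∈ S)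
    (hra : ∀ b ∈ A, ¬ r b a ∧ ¬ r a b) : IsNAntichain r S (n + 1) (insert a A) where
  subset := insert_subset ha (hA.subset.trans (erase_subset a S))
  isAntichain := by
    rw [coe_insert]
    exact hA.isAntichain.insert (fun b hb _ => (hra b hb).1) fun b hb _ => (hra b hb).2
  card_eq := by
    rw [card_insert_of_notMem fun h => notMem_erase a S (hA.subset h), hA.card_eq]

end IsNAntichain

namespace IsChainColoring

theorem mono {m : ℕ} (hc : IsChainColoring r S m c) (hmn : m ≤ n) : IsChainColoring r S n c :=
  ⟨fun x hx => (hc.lt x hx).trans_le hmn, hc.isChain⟩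

theorem injOn_of_isAntichain (hc : IsChainColoring r S n c) (hAS : A ⊆ S)
    (hA : IsAntichain r (A : Set α)) : Set.InjOn c A := by
  intro x hx y hy hxy
  by_contra hne
  rcases hc.isChain (c y) ⟨hAS hx, hxy⟩ ⟨hAS hy, rfl⟩ hne with h | h
  exacts [hA hx hy hne h, hA hy hx (Ne.symm hne) h]

theorem mapsTo_range (hc : IsChainColoring r S n c) (hAS : A ⊆ S) :
    Set.MapsTo c A (range n) :=
  fun x hx => mem_coe.2 (mem_range.2 (hc.lt x (hAS hx)))

theorem card_le_of_isAntichain (hc : IsChainColoring r S n c) (hAS : A ⊆ S)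
    (hA : IsAntichain r (A : Set α)) : #A ≤ n := by
  simpa only [card_range] using
    card_le_card_of_injOn c (hc.mapsTo_range hAS) (hc.injOn_of_isAntichain hAS hA)

theorem exists_mem_eq_of_isNAntichain (hc : IsChainColoring r S n c) (hA : IsNAntichain r S n A)
    {i : ℕ} (hi : i < n) : ∃ x ∈ A, c x = i :=
  surjOn_of_injOn_of_card_le c (hc.mapsTo_range hA.subset)
    (hc.injOn_of_isAntichain hA.subset hA.isAntichain)
    (by rw [card_range, hA.card_eq]) (mem_coe.2 (mem_range.2 hi))

theorem exists_of_sdiff_isChain [DecidableEq α] {K : Finset α} (hK : IsChain r (K : Set α))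
    (hc : IsChainColoring r (S \ K) n c) : ∃ c', IsChainColoring r S (n + 1) c' := by
  refine ⟨fun x => if x ∈ K then n else c x, fun x hx => ?_, ?_⟩
  · split_ifs with hxK
    · exact n.lt_succ_self
    · exact (hc.lt x (mem_sdiff.2 ⟨hx, hxK⟩)).trans n.lt_succ_self
  · rintro i x ⟨hxS, hxi⟩ y ⟨hyS, hyi⟩ hne
    have hxy := hxi.trans hyi.symm
    by_cases hxK : x ∈ K <;> by_cases hyK : y ∈ K <;>
      simp only [hxK, hyK, if_true, if_false] at hxy
    · exact hK hxK hyK hne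
    · exact absurd hxy (hc.lt y (mem_sdiff.2 ⟨hyS, hyK⟩)).ne'
    · exact absurd hxy (hc.lt x (mem_sdiff.2 ⟨hxS, hxK⟩)).ne
    · exact hc.isChain (c y) ⟨mem_sdiff.2 ⟨hxS, hxK⟩, hxy⟩ ⟨mem_sdiff.2 ⟨hyS, hyK⟩, rfl⟩ hne

end IsChainColoring

end Relation

section LE

variable {α : Type*} [LE α] {S A : Finset α} {n : ℕ} {c : α → ℕ} {b : α}

/-- `t` dominates every element of its colour class lying on an `n`-element antichain of `S`.
Such elements, one in each class, form the antichain `B` of Galvin's argument. -/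
def IsColorTop (S : Finset α) (n : ℕ) (c : α → ℕ) (t : α) : Prop :=
  ∀ C, IsNAntichain (· ≤ ·) S n C → ∀ y ∈ C, c y = c t → y ≤ t

theorem IsChainColoring.card_lt_of_isColorTop (hc : IsChainColoring (· ≤ ·) S n c) (hbS : b ∈ S)
    (hb : IsColorTop S n c b) (hAS : A ⊆ S) (hA : IsAntichain (· ≤ ·) (A : Set α))
    (hAb : ∀ y ∈ A, c y = c b → ¬ y ≤ b) : #A < n := by
  refine (hc.card_le_of_isAntichain hAS hA).lt_of_ne fun hAn => ?_
  have hA' : IsNAntichain (· ≤ ·) S n A := ⟨hAS, hA, hAn⟩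
  obtain ⟨y, hyA, hyb⟩ := hc.exists_mem_eq_of_isNAntichain hA' (hc.lt b hbS)
  exact hAb y hyA hyb (hb A hA' y hyA hyb)

end LE

section Preorder

variable {α : Type*} [Preorder α] {S A : Finset α} {n : ℕ} {c : α → ℕ} {a b : α}

namespace IsChainColoring

theorem exists_isColorTop (hc : IsChainColoring (· ≤ ·) S n c)
    (hA : IsNAntichain (· ≤ ·) S n A) (ha : a ∈ A) :
    ∃ t, c t = c a ∧ (∃ B, IsNAntichain (· ≤ ·) S n B ∧ t ∈ B) ∧ IsColorTop S n c t := by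
  classical
  let T := {y ∈ S | c y = c a ∧ ∃ B, IsNAntichain (· ≤ ·) S n B ∧ y ∈ B}
  have hT : T.Nonempty := ⟨a, mem_filter.2 ⟨hA.subset ha, rfl, A, hA, ha⟩⟩
  obtain ⟨t, htT, ht_max⟩ := T.exists_maximal hT
  obtain ⟨htS, hta, htB⟩ := mem_filter.1 htT
  refine ⟨t, hta, htB, fun C hC y hy hyt => ?_⟩
  rcases (hc.isChain (c t)).total ⟨hC.subset hy, hyt⟩ ⟨htS, rfl⟩ with hle | hge
  · exact hle
  · exact ht_max (mem_filter.2 ⟨hC.subset hy, hyt.trans hta, C, hC, hy⟩) hge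

theorem color_eq_of_isColorTop_of_le (hc : IsChainColoring (· ≤ ·) S n c)
    (hA : IsNAntichain (· ≤ ·) S n A) (ha : a ∈ A) (hbS : b ∈ S) (hb : IsColorTop S n c b)
    (hba : b ≤ a) : c b = c a := by
  obtain ⟨z, hzA, hzb⟩ := hc.exists_mem_eq_of_isNAntichain hA (hc.lt b hbS)
  have hza : z ≤ a := (hb A hA z hzA hzb).trans hba
  rw [← hzb, hA.isAntichain.eq hzA ha hza]

theorem exists_isNAntichain_forall_isColorTop (hc : IsChainColoring (· ≤ ·) S n c)
    (hA : IsNAntichain (· ≤ ·) S n A) :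
    ∃ B, IsNAntichain (· ≤ ·) S n B ∧ ∀ b ∈ B, IsColorTop S n c b := by
  classical
  choose top hc_top h_mem h_top using fun x : A => hc.exists_isColorTop hA x.2
  have h_inj : Function.Injective (c ∘ top) := fun x y hxy => Subtype.ext <|
    hc.injOn_of_isAntichain hA.subset hA.isAntichain x.2 y.2 <|
      (hc_top x).symm.trans (hxy.trans (hc_top y))
  have h_topS : ∀ x, top x ∈ S := fun x =>
    (h_mem x).elim fun _ hB => hB.1.subset hB.2
  refine ⟨univ.image top, ⟨?_, ?_, ?_⟩, ?_⟩
  · exact image_subset_iff.2 fun x _ => h_topS x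
  · rw [coe_image]
    rintro _ ⟨x, -, rfl⟩ _ ⟨y, -, rfl⟩ hne hle
    obtain ⟨B, hB, hyB⟩ := h_mem y
    exact hne (congrArg top (h_inj
      (hc.color_eq_of_isColorTop_of_le hB hyB (h_topS x) (h_top x) hle)))
  · rw [card_image_of_injective _ h_inj.of_comp, card_univ, Fintype.card_coe, hA.card_eq]
  · exact forall_mem_image.2 fun x _ => h_top x

theorem isChain_insert_filter_le [DecidableEq α] [DecidableLE α]
    (hc : IsChainColoring (· ≤ ·) S n c) (hba : b ≤ a) :
    IsChain (· ≤ ·) ((insert a {z ∈ S | c z = c b ∧ z ≤ b} : Finset α) : Set α) := by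
  have h_below : IsChain (· ≤ ·) {z | z ∈ S ∧ c z = c b ∧ z ≤ b} :=
    (hc.isChain (c b)).mono (Set.ofPred_subset_ofPred.2 fun _ hz => ⟨hz.1, hz.2.1⟩)
  rw [coe_insert, coe_filter]
  exact h_below.insert fun z hz _ => Or.inr (hz.2.2.trans hba)

end IsChainColoring

theorem exists_isNAntichain_isChainColoring (S : Finset α) :
    ∃ n A c, IsNAntichain (· ≤ ·) S n A ∧ IsChainColoring (· ≤ ·) S n c := by
  classical
  induction S using Finset.strongInduction with
  | H S ih =>
  rcases S.eq_empty_or_nonempty with rfl | hS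
  · exact ⟨0, ∅, 0, ⟨Subset.rfl, by simp, card_empty⟩, ⟨by simp, by simp [IsChain]⟩⟩
  obtain ⟨a, haS, ha_max⟩ := S.exists_maximal hS
  obtain ⟨n, A, c, hA, hc⟩ := ih (S.erase a) (erase_ssubset haS)
  obtain ⟨B, hB, hB_top⟩ := hc.exists_isNAntichain_forall_isColorTop hA
  by_cases h : ∃ b ∈ B, b ≤ a
  · obtain ⟨b, hbB, hba⟩ := h
    let K := insert a {z ∈ S.erase a | c z = c b ∧ z ≤ b}
    have hKS : S \ K ⊆ S.erase a := by
      rw [erase_eq]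
      exact sdiff_subset_sdiff Subset.rfl (singleton_subset_iff.2 (mem_insert_self _ _))
    obtain ⟨m, A', c', hA', hc'⟩ := ih (S \ K) (hKS.trans_ssubset (erase_ssubset haS))
    have hmn : m < n := by
      rw [← hA'.card_eq]
      refine hc.card_lt_of_isColorTop (hB.subset hbB) (hB_top b hbB) (hA'.subset.trans hKS)
        hA'.isAntichain fun y hy hyc hyb => ?_
      have hyK := (mem_sdiff.1 (hA'.subset hy)).2
      exact hyK (mem_insert_of_mem (mem_filter.2 ⟨hKS (hA'.subset hy), hyc, hyb⟩))
    obtain ⟨d, hd⟩ := hc'.exists_of_sdiff_isChain (hc.isChain_insert_filter_le hba)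
    exact ⟨n, A, d, hA.mono (erase_subset a S), hd.mono hmn⟩
  · push Not at h
    have h_incomp : ∀ b ∈ B, ¬ b ≤ a ∧ ¬ a ≤ b := fun b hb =>
      ⟨h b hb, fun hab => h b hb (ha_max (mem_of_mem_erase (hB.subset hb)) hab)⟩
    rw [erase_eq] at hc
    obtain ⟨d, hd⟩ := hc.exists_of_sdiff_isChain (K := {a}) (by simp)
    exact ⟨n + 1, insert a B, d, hB.insert_of_erase haS h_incomp, hd⟩

end Preorder

section TransitiveOn

variable {α : Type*} {r : α → α → Prop} {S : Finset α}

/-- The preorder generated by the restriction to `S` of a relation transitive on `S`; elements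
outside `S` are comparable only to themselves. -/
abbrev preorderOfTransOn (htrans : ∀ x ∈ S, ∀ y ∈ S, ∀ z ∈ S, r x y → r y z → r x z) :
    Preorder α where
  le x y := x = y ∨ x ∈ S ∧ y ∈ S ∧ r x y
  le_refl x := Or.inl rfl
  le_trans := by
    rintro x y z (rfl | ⟨hx, hy, hxy⟩) (rfl | ⟨hy', hz, hyz⟩)
    · exact Or.inl rfl
    · exact Or.inr ⟨hy', hz, hyz⟩
    · exact Or.inr ⟨hx, hy, hxy⟩
    · exact Or.inr ⟨hx, hz, htrans x hx y hy z hz hxy hyz⟩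

theorem exists_isNAntichain_isChainColoring_of_transOn
    (htrans : ∀ x ∈ S, ∀ y ∈ S, ∀ z ∈ S, r x y → r y z → r x z) :
    ∃ n A c, IsNAntichain r S n A ∧ IsChainColoring r S n c := by
  let _ := preorderOfTransOn htrans
  obtain ⟨n, A, c, hA, hc⟩ := exists_isNAntichain_isChainColoring S
  refine ⟨n, A, c, ⟨hA.subset, fun x hx y hy hne hxy => ?_, hA.card_eq⟩,
    ⟨hc.lt, fun i x hx y hy hne => ?_⟩⟩
  · exact hA.isAntichain hx hy hne (Or.inr ⟨hA.subset hx, hA.subset hy, hxy⟩)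
  · rcases hc.isChain i hx hy hne with (h | h) | (h | h)
    exacts [absurd h hne, Or.inl h.2.2, absurd h.symm hne, Or.inr h.2.2]

end TransitiveOn

theorem isAntichain_coe_iff {α : Type*} {r : α → α → Prop} {X : Finset α} :
    IsAntichain r (X : Set α) ↔ ∀ x ∈ X, ∀ y ∈ X, x ≠ y → ¬ r x y ∧ ¬ r y x :=
  ⟨fun h _ hx _ hy hne => ⟨h hx hy hne, h hy hx hne.symm⟩,
    fun h x hx y hy hne => (h x hx y hy hne).1⟩

theorem stmt0_general {α : Type*} (S : Finset α) (r : α → α → Prop)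
    (htrans : ∀ x ∈ S, ∀ y ∈ S, ∀ z ∈ S, r x y → r y z → r x z)
    (k l : ℕ)
    (hk : ∀ X ⊆ S, (∀ x ∈ X, ∀ y ∈ X, x ≠ y → ¬ r x y ∧ ¬ r y x) → X.card ≤ k)
    (hl_max : ∀ X ⊆ S, (∀ x ∈ X, ∀ y ∈ X, x ≠ y → ¬ r x y ∧ ¬ r y x) → X.card ≤ l)
    (hl_attained : ∃ X ⊆ S, (∀ x ∈ X, ∀ y ∈ X, x ≠ y → ¬ r x y ∧ ¬ r y x) ∧ X.card = l) :
    (∃ c : α → ℕ, (∀ x ∈ S, c x < k) ∧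
      (∀ x ∈ S, ∀ y ∈ S, x ≠ y → c x = c y → r x y ∨ r y x)) ∧
    (∃ c : α → ℕ, (∀ x ∈ S, c x < l) ∧
      (∀ x ∈ S, ∀ y ∈ S, x ≠ y → c x = c y → r x y ∨ r y x) ∧
      (∀ p < l, ∃ x ∈ S, c x = p)) := by
  obtain ⟨n, A, c, hA, hc⟩ := exists_isNAntichain_isChainColoring_of_transOn htrans
  obtain ⟨L, hLS, hL, hLl⟩ := hl_attained
  have hnk : n ≤ k := hA.card_eq ▸ hk A hA.subset (isAntichain_coe_iff.1 hA.isAntichain)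
  have hnl : n ≤ l := hA.card_eq ▸ hl_max A hA.subset (isAntichain_coe_iff.1 hA.isAntichain)
  have h_chain : ∀ x ∈ S, ∀ y ∈ S, x ≠ y → c x = c y → r x y ∨ r y x :=
    fun x hx y hy hne hxy => hc.isChain (c y) ⟨hx, hxy⟩ ⟨hy, rfl⟩ hne
  have hL' : IsNAntichain r S l L := ⟨hLS, isAntichain_coe_iff.2 hL, hLl⟩
  refine ⟨⟨c, (hc.mono hnk).lt, h_chain⟩, c, (hc.mono hnl).lt, h_chain, fun p hp => ?_⟩
  obtain ⟨x, hxL, hxp⟩ := (hc.mono hnl).exists_mem_eq_of_isNAntichain hL' hp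
  exact ⟨x, hLS hxL, hxp⟩

/-- Let `S` be a finite set equipped with a strict partial order `r` (irreflexive
and transitive on `S`).  If every totally disordered (pairwise incomparable) subset of `S` has
at most `k` elements, then `S` can be partitioned into at most `k` linearly ordered subsets
(encoded by a coloring `c : α → ℕ` with fewer than `k` colors on `S`, each color class being a
chain).  Moreover, if `l` is the maximal cardinality of a totally disordered subset of `S`,
then `S` can be partitioned into exactly `l` linearly ordered subsets (each of the `l` color
classes being nonempty). -/
theorem stmt0 {α : Type*} (S : Finset α) (r : α → α → Prop)
    (hirr : ∀ x ∈ S, ¬ r x x)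
    (htrans : ∀ x ∈ S, ∀ y ∈ S, ∀ z ∈ S, r x y → r y z → r x z)
    (k l : ℕ)
    (hk : ∀ X ⊆ S, (∀ x ∈ X, ∀ y ∈ X, x ≠ y → ¬ r x y ∧ ¬ r y x) → X.card ≤ k)
    (hl_max : ∀ X ⊆ S, (∀ x ∈ X, ∀ y ∈ X, x ≠ y → ¬ r x y ∧ ¬ r y x) → X.card ≤ l)
    (hl_attained : ∃ X ⊆ S, (∀ x ∈ X, ∀ y ∈ X, x ≠ y → ¬ r x y ∧ ¬ r y x) ∧ X.card = l) :
    (∃ c : α → ℕ, (∀ x ∈ S, c x < k) ∧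
      (∀ x ∈ S, ∀ y ∈ S, x ≠ y → c x = c y → r x y ∨ r y x)) ∧
    (∃ c : α → ℕ, (∀ x ∈ S, c x < l) ∧
      (∀ x ∈ S, ∀ y ∈ S, x ≠ y → c x = c y → r x y ∨ r y x) ∧
      (∀ p < l, ∃ x ∈ S, c x = p)) := by
  exact stmt0_general S r htrans k l hk hl_max hl_attained
end

section
/- Let (X,<) be a linearly ordered set, and order finite multisets over X as follows: for finite multisets M and N over X, set M < N if and only if, listing the elements of each multiset in decreasing order, either at the first position where the two lists differ the element of M is smaller than that of N, or the list of M is a proper initial segment of the list of N; write M ≤ N for M < N or M = N. Then: if M₁ ≤ N₁ and M₂ ≤ N₂, then M₁ + M₂ ≤ N₁ + N₂ (multiset sum); and if in addition M₁ < N₁ or M₂ < N₂, then M₁ + M₂ < N₁ + N₂. -/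
/-!
In two decreasing lists, the first position where they differ exhibits the largest element whose
multiplicities differ. So the order compares multisets by their multiplicity functions
lexicographically, starting from the largest elements, and the sum of multisets is the pointwise
sum of these functions.
-/

/-- The elements of a finite multiset over a linearly ordered set, listed in decreasing order. -/
def descList {X : Type*} [LinearOrder X] (M : Multiset X) : List X :=
  (M.sort (· ≤ ·)).reverse

/-- The order on finite multisets over a linearly ordered set: `M < N` iff, listing the
elements of each multiset in decreasing order, either at the first position where the two
lists differ the element of `M` is smaller than that of `N`, or the list of `M` is a proper
initial segment of the list of `N`. -/
def mlt {X : Type*} [LinearOrder X] (M N : Multiset X) : Prop :=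
  List.Lex (· < ·) (descList M) (descList N)

/-- `M ≤ N` iff `M < N` or `M = N`. -/
def mle {X : Type*} [LinearOrder X] (M N : Multiset X) : Prop :=
  mlt M N ∨ M = N

section Preorder

variable {α : Type*} [Preorder α] [DecidableEq α]

theorem count_eq_zero_of_pairwise_ge_cons {a b : α} {l : List α}
    (hl : (a :: l).Pairwise (· ≥ ·)) (hab : a < b) : (a :: l).count b = 0 := by
  refine List.count_eq_zero.mpr fun hb ↦ ?_
  rcases List.mem_cons.mp hb with rfl | hb
  · exact hab.false
  · exact hab.not_ge (List.rel_of_pairwise_cons hl hb)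

theorem exists_count_lt_of_lex {l l' : List α} (hl : l.Pairwise (· ≥ ·))
    (hl' : l'.Pairwise (· ≥ ·)) (h : List.Lex (· < ·) l l') :
    ∃ a, (∀ b, a < b → l.count b = l'.count b) ∧ l.count a < l'.count a := by
  induction h with
  | @nil c t =>
    exact ⟨c, fun b hcb ↦ by rw [count_eq_zero_of_pairwise_ge_cons hl' hcb, List.count_nil],
      by simp⟩
  | @cons c t t' _ ih =>
    obtain ⟨a, heq, hlt⟩ := ih hl.of_cons hl'.of_cons
    refine ⟨a, fun b hab ↦ ?_, ?_⟩
    · rw [List.count_cons, List.count_cons, heq b hab]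
    · rw [List.count_cons, List.count_cons]
      exact Nat.add_lt_add_right hlt _
  | @rel c t d t' hcd =>
    refine ⟨d, fun b hdb ↦ ?_, ?_⟩
    · rw [count_eq_zero_of_pairwise_ge_cons hl (hcd.trans hdb),
        count_eq_zero_of_pairwise_ge_cons hl' hdb]
    · rw [count_eq_zero_of_pairwise_ge_cons hl hcd]
      exact List.count_pos_iff.mpr List.mem_cons_self

end Preorder

section LinearOrder

variable {X : Type*} [LinearOrder X] {M N : Multiset X}

theorem coe_descList (M : Multiset X) : (descList M : Multiset X) = M := by
  rw [descList, Multiset.coe_reverse, Multiset.sort_eq]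

theorem descList_injective : Function.Injective (descList : Multiset X → List X) :=
  Function.LeftInverse.injective (g := Multiset.ofList) coe_descList

theorem pairwise_descList (M : Multiset X) : (descList M).Pairwise (· ≥ ·) :=
  List.pairwise_reverse.mpr (M.pairwise_sort (· ≤ ·))

theorem count_descList (a : X) (M : Multiset X) : (descList M).count a = M.count a := by
  rw [← Multiset.coe_count, coe_descList]

/-- The multiplicity function of a multiset, as an additive equivalence onto the finitely supported
functions `X →₀ ℕ`. The target carries the colexicographic order, in which the largest argument
where two functions differ decides. -/
noncomputable def colexCount : Multiset X ≃+ Colex (X →₀ ℕ) where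
  toEquiv := Multiset.toFinsupp.toEquiv.trans toColex
  map_add' := map_add Multiset.toFinsupp

theorem colexCount_lt_iff :
    colexCount M < colexCount N ↔
      ∃ a, (∀ b, a < b → M.count b = N.count b) ∧ M.count a < N.count a :=
  Iff.rfl

theorem colexCount_lt_of_mlt (h : mlt M N) : colexCount M < colexCount N := by
  simpa only [colexCount_lt_iff, count_descList] using
    exists_count_lt_of_lex (pairwise_descList M) (pairwise_descList N) h

theorem mlt_iff_colexCount_lt : mlt M N ↔ colexCount M < colexCount N := by
  refine ⟨colexCount_lt_of_mlt, fun h ↦ ?_⟩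
  rcases lt_trichotomy (descList M) (descList N) with hlt | heq | hgt
  · exact hlt
  · exact absurd h (descList_injective heq ▸ lt_irrefl _)
  · exact absurd h (colexCount_lt_of_mlt hgt).asymm

theorem mle_iff_colexCount_le : mle M N ↔ colexCount M ≤ colexCount N := by
  rw [mle, mlt_iff_colexCount_lt, le_iff_lt_or_eq, colexCount.injective.eq_iff]

end LinearOrder

/-- the multiset order is compatible with multiset sum: if `M₁ ≤ N₁` and
`M₂ ≤ N₂` then `M₁ + M₂ ≤ N₁ + N₂`, and if moreover `M₁ < N₁` or `M₂ < N₂` then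
`M₁ + M₂ < N₁ + N₂`. -/
theorem stmt1 {X : Type*} [LinearOrder X] (M₁ M₂ N₁ N₂ : Multiset X)
    (h₁ : mle M₁ N₁) (h₂ : mle M₂ N₂) :
    mle (M₁ + M₂) (N₁ + N₂) ∧
      ((mlt M₁ N₁ ∨ mlt M₂ N₂) → mlt (M₁ + M₂) (N₁ + N₂)) := by
  simp only [mle_iff_colexCount_le, mlt_iff_colexCount_lt, map_add] at h₁ h₂ ⊢
  refine ⟨add_le_add h₁ h₂, ?_⟩
  rintro (hlt | hlt)
  · exact add_lt_add_of_lt_of_le hlt h₂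
  · exact add_lt_add_of_le_of_lt h₁ hlt
end
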